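/- Let n ≥ 1, let P ⊆ [0,1]^n be a convex set, and let k ≥ 0. Then L^{k+1}(P) = ⋂_{j=1}^{n} conv( L^k(P ∩ {x : x_j = 0}) ∪ L^k(P ∩ {x : x_j = 1}) ). -/

import Mathlib

open Set

def cube (n : ℕ) : Set (Fin n → ℝ) := {x | ∀ i, 0 ≤ x i ∧ x i ≤ 1}

def Lop (n : ℕ) (P : Set (Fin n → ℝ)) : Set (Fin n → ℝ) :=
  ⋂ i : Fin n, convexHull ℝ ((P ∩ {x | x i = 0}) ∪ (P ∩ {x | x i = 1}))

def Lk (n : ℕ) : ℕ → Set (Fin n → ℝ) → Set (Fin n → ℝ)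
  | 0, P => P
  | k + 1, P => Lop n (Lk n k P)

theorem hull_face {n : ℕ} (S : Set (Fin n → ℝ)) (l : (Fin n → ℝ) →ₗ[ℝ] ℝ) (c : ℝ)
    (hS : ∀ x ∈ S, c ≤ l x) :
    convexHull ℝ S ∩ {x | l x = c} = convexHull ℝ (S ∩ {x | l x = c}) := by
  have hF : convexHull ℝ (S ∩ {x | l x = c}) ⊆ {x | l x = c} :=
    convexHull_min inter_subset_right (convex_hyperplane l.isLinear c)
  apply Subset.antisymm
  · have hT : Convex ℝ ({x | c < l x} ∪ convexHull ℝ (S ∩ {x | l x = c})) := by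
      rw [convex_iff_forall_pos]
      intro x hx y hy a b ha hb hab
      have key : ∀ z ∈ ({x | c < l x} ∪ convexHull ℝ (S ∩ {x | l x = c})), c ≤ l z := by
        rintro z (hz | hz)
        · exact le_of_lt hz
        · exact le_of_eq (hF hz).symm
      have kx := key x hx
      have ky := key y hy
      have hc : c = a * c + b * c := by rw [← add_mul, hab, one_mul]
      rcases hx with hx | hx
      · left
        have hx' : c < l x := hx
        have h1 := mul_lt_mul_of_pos_left hx' ha
        have h2 := mul_le_mul_of_nonneg_left ky hb.le
        simp only [mem_ofPred_eq, map_add, map_smul, smul_eq_mul]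
        linarith
      · rcases hy with hy | hy
        · left
          have hy' : c < l y := hy
          have h1 := mul_lt_mul_of_pos_left hy' hb
          have h2 := mul_le_mul_of_nonneg_left kx ha.le
          simp only [mem_ofPred_eq, map_add, map_smul, smul_eq_mul]
          linarith
        · right
          exact convex_convexHull ℝ _ hx hy ha.le hb.le hab
    have hsub : S ⊆ {x | c < l x} ∪ convexHull ℝ (S ∩ {x | l x = c}) := by
      intro x hx
      rcases (hS x hx).lt_or_eq with h | h
      · exact Or.inl h
      · exact Or.inr (subset_convexHull ℝ _ ⟨hx, h.symm⟩)
    rintro x ⟨hx, hxc⟩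
    rcases convexHull_min hsub hT hx with h | h
    · exact absurd hxc (ne_of_gt h)
    · exact h
  · exact subset_inter (convexHull_mono inter_subset_left) hF

theorem hull_cube_face {n : ℕ} (S : Set (Fin n → ℝ)) (hS : S ⊆ cube n) (j : Fin n) (c : ℝ)
    (hc : c = 0 ∨ c = 1) :
    convexHull ℝ S ∩ {x | x j = c} = convexHull ℝ (S ∩ {x | x j = c}) := by
  rcases hc with rfl | rfl
  · exact hull_face S (LinearMap.proj j) 0 (fun x hx => (hS hx j).1)
  · have h := hull_face S (-LinearMap.proj j) (-1)
      (fun x hx => by simpa using (hS hx j).2)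
    simpa using h

theorem Lop_face {n : ℕ} (P : Set (Fin n → ℝ)) (hP : P ⊆ cube n) (j : Fin n) (c : ℝ)
    (hc : c = 0 ∨ c = 1) :
    Lop n P ∩ {x | x j = c} = Lop n (P ∩ {x | x j = c}) := by
  haveI : Nonempty (Fin n) := ⟨j⟩
  unfold Lop
  rw [iInter_inter]
  refine iInter_congr fun i => ?_
  rw [hull_cube_face _ (union_subset (inter_subset_left.trans hP)
    (inter_subset_left.trans hP)) j c hc, union_inter_distrib_right,
    inter_right_comm, inter_right_comm P {x | x i = 1}]

theorem convex_cube (n : ℕ) : Convex ℝ (cube n) := by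
  have : cube n = Icc 0 1 := by
    ext x
    simp [cube, Pi.le_def, forall_and]
  rw [this]
  exact convex_Icc _ _

theorem Lk_cube {n : ℕ} (P : Set (Fin n → ℝ)) (hP : P ⊆ cube n) (j : Fin n) (k : ℕ) :
    Lk n k P ⊆ cube n := by
  induction k with
  | zero => exact hP
  | succ k ih =>
    exact (iInter_subset _ j).trans (convexHull_min (union_subset
      (inter_subset_left.trans ih) (inter_subset_left.trans ih)) (convex_cube n))

theorem Lk_face {n : ℕ} (P : Set (Fin n → ℝ)) (hP : P ⊆ cube n) (j : Fin n) (c : ℝ)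
    (hc : c = 0 ∨ c = 1) (k : ℕ) :
    Lk n k P ∩ {x | x j = c} = Lk n k (P ∩ {x | x j = c}) := by
  induction k with
  | zero => rfl
  | succ k ih =>
    change Lop n (Lk n k P) ∩ _ = Lop n (Lk n k _)
    rw [Lop_face _ (Lk_cube P hP j k) j c hc, ih]

theorem stmt5 (n : ℕ) (hn : 1 ≤ n) (P : Set (Fin n → ℝ)) (hPcube : P ⊆ cube n)
    (hPconv : Convex ℝ P) (k : ℕ) :
    Lk n (k + 1) P =
      ⋂ j : Fin n, convexHull ℝ
        (Lk n k (P ∩ {x | x j = 0}) ∪ Lk n k (P ∩ {x | x j = 1})) := by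
  change Lop n (Lk n k P) = _
  unfold Lop
  refine iInter_congr fun j => ?_
  rw [Lk_face P hPcube j 0 (Or.inl rfl), Lk_face P hPcube j 1 (Or.inr rfl)]
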